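/- Let C be a quasicategory, let n ≥ 2, and let σ: Λ[n,n] → C be a map from the outer horn such that the edge of σ joining the (n−1)-st and n-th vertices is an equivalence in C. Then σ extends along the inclusion Λ[n,n] ⊆ Δ[n] to a map Δ[n] → C. -/

import Mathlib

open CategoryTheory Simplicial Opposite

namespace SSetPaper

universe u

/-- An edge `f` of a simplicial set `C` is an equivalence if its class in the homotopy
category is an isomorphism: there is an edge `g` in the opposite direction together with
`2`-simplices witnessing that the two composites are (homotopic to) identities. -/
def IsEquivalenceEdge (C : SSet.{u}) (f : C _⦋1⦌) : Prop :=
  ∃ g : C _⦋1⦌,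
    (∃ ρ : C _⦋2⦌, C.δ 0 ρ = g ∧ C.δ 2 ρ = f ∧ C.δ 1 ρ = C.σ 0 (C.δ 1 f)) ∧
    (∃ ρ : C _⦋2⦌, C.δ 0 ρ = f ∧ C.δ 2 ρ = g ∧ C.δ 1 ρ = C.σ 0 (C.δ 0 f))

/-- The edge of the outer horn `Λ[n+2, n+2]` joining the `(n+1)`-st and `(n+2)`-nd
vertices. -/
def topEdge (n : ℕ) : (Λ[n + 2, Fin.last (n + 2)] : SSet) _⦋1⦌ :=
  SSet.horn.edge (n + 2) (Fin.last (n + 2)) ⟨n + 1, by omega⟩ (Fin.last (n + 2))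
    (by simp [Fin.le_def])
    (by
      rw [Finset.insert_eq_self.mpr (by simp)]
      refine le_trans (Finset.card_insert_le _ _) ?_
      simp only [Finset.card_singleton]
      omega)

end SSetPaper

/-!
STATEMENT 10: Let `C` be a quasicategory, let `n ≥ 2`, and let `σ₀ : Λ[n,n] → C` be a map
from the outer horn such that the edge of `σ₀` joining the `(n-1)`-st and `n`-th vertices is
an equivalence in `C`.  Then `σ₀` extends along `Λ[n,n] ⊆ Δ[n]` to a map `Δ[n] → C`.
-/


namespace PM

/-- image of a (possibly degenerate) simplex of the infinite simplex on `ℕ`. -/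
def img {m : ℕ} (s : Fin (m + 1) →o ℕ) : Finset ℕ := Finset.univ.image s

lemma mem_img {m : ℕ} (s : Fin (m + 1) →o ℕ) (x : ℕ) : x ∈ img s ↔ ∃ i, s i = x := by
  simp [img]

lemma self_mem_img {m : ℕ} (s : Fin (m + 1) →o ℕ) (i) : s i ∈ img s := by
  simp [img]

lemma img_comp {m m' : ℕ} (s : Fin (m + 1) →o ℕ) (α : Fin (m' + 1) →o Fin (m + 1)) :
    img (s.comp α) ⊆ img s := by
  intro x hx
  rw [mem_img] at hx ⊢
  obtain ⟨i, rfl⟩ := hx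
  exact ⟨α i, rfl⟩

def Down (P : Finset ℕ → Prop) : Prop := ∀ F G, F ⊆ G → P G → P F

/-- A map to `C` from the simplicial subset of `Δ^ℕ` given by the predicate `P`. -/
structure PMap (C : SSet.{0}) (P : Finset ℕ → Prop) where
  toFun {m : ℕ} (s : Fin (m + 1) →o ℕ) (h : P (img s)) : C _⦋m⦌
  nat {m m' : ℕ} (α : Fin (m' + 1) →o Fin (m + 1)) (s : Fin (m + 1) →o ℕ) (h : P (img s))
    (h' : P (img (s.comp α))) :
    toFun (s.comp α) h' = C.map (SimplexCategory.mkHom α).op (toFun s h)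

variable {C : SSet.{0}} {P Q R : Finset ℕ → Prop}

def Agree (φ : PMap C P) (ψ : PMap C Q) : Prop :=
  ∀ ⦃m : ℕ⦄ (s : Fin (m + 1) →o ℕ) (h : P (img s)) (h' : Q (img s)), φ.toFun s h = ψ.toFun s h'

lemma PMap.congr (φ : PMap C P) {m : ℕ} {s t : Fin (m + 1) →o ℕ} (e : s = t) (h : P (img s)) :
    φ.toFun s h = φ.toFun t (e ▸ h) := by
  subst e; rfl

lemma PMap.nat' (φ : PMap C P) {m m' : ℕ} (α : Fin (m' + 1) →o Fin (m + 1))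
    (s : Fin (m + 1) →o ℕ) (t : Fin (m' + 1) →o ℕ) (e : t = s.comp α) (h : P (img s))
    (h' : P (img t)) :
    φ.toFun t h' = C.map (SimplexCategory.mkHom α).op (φ.toFun s h) := by
  subst e; exact φ.nat _ _ _ _

open Classical in
lemma glue (φ : PMap C P) (ψ : PMap C Q) (hP : Down P) (hQ : Down Q) (ha : Agree φ ψ) :
    ∃ χ : PMap C (fun F => P F ∨ Q F), Agree χ φ ∧ Agree χ ψ := by
  refine ⟨⟨fun s h => if h1 : P (img s) then φ.toFun s h1 else
    ψ.toFun s (h.resolve_left h1), ?_⟩, ?_, ?_⟩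
  · intro m m' α s h h'
    by_cases h1 : P (img s)
    · have h2 : P (img (s.comp α)) := hP _ _ (img_comp _ _) h1
      simp only [h1, h2, dite_true]
      exact φ.nat _ _ _ _
    · have h3 : Q (img s) := h.resolve_left h1
      have h4 : Q (img (s.comp α)) := hQ _ _ (img_comp _ _) h3
      by_cases h2 : P (img (s.comp α))
      · simp only [h1, h2, dite_true, dite_false]
        rw [ha _ h2 h4]
        exact ψ.nat _ _ _ _
      · simp only [h1, h2, dite_false]
        exact ψ.nat _ _ _ _
  · intro m s h h'
    simp [h']
  · intro m s h h'
    by_cases h1 : P (img s)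
    · simp only [h1, dite_true]
      exact ha _ _ _
    · simp [h1]

def pullHom (π : ℕ → ℕ) {m : ℕ} (s : Fin (m + 1) →o ℕ) (h : MonotoneOn π (img s)) :
    Fin (m + 1) →o ℕ :=
  ⟨fun i => π (s i), fun i j hij => h (self_mem_img s i) (self_mem_img s j) (s.monotone hij)⟩

lemma img_pullHom (π : ℕ → ℕ) {m : ℕ} (s : Fin (m + 1) →o ℕ) (h : MonotoneOn π (img s)) :
    img (pullHom π s h) = (img s).image π := by
  ext x
  rw [mem_img, Finset.mem_image]
  constructor
  · rintro ⟨i, rfl⟩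
    exact ⟨s i, self_mem_img s i, rfl⟩
  · rintro ⟨a, ha, rfl⟩
    obtain ⟨i, rfl⟩ := (mem_img _ _).1 ha
    exact ⟨i, rfl⟩

def pull (φ : PMap C P) (π : ℕ → ℕ) (hQ : ∀ F, Q F → MonotoneOn π F ∧ P (F.image π)) :
    PMap C Q where
  toFun s h := φ.toFun (pullHom π s (hQ _ h).1) (by rw [img_pullHom]; exact (hQ _ h).2)
  nat α s h h' := φ.nat' α (pullHom π s (hQ _ h).1) _ rfl _ _

def ofSimplex {m : ℕ} (c : C _⦋m⦌) : PMap C (fun F => F ⊆ Finset.range (m + 1)) where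
  toFun s h := C.map (SimplexCategory.mkHom (⟨fun i => ⟨s i, by
    simpa using h (self_mem_img s i)⟩, fun i j hij => s.monotone hij⟩ : _ →o Fin (m + 1))).op c
  nat α s h h' := by
    rw [← ConcreteCategory.comp_apply, ← C.map_comp, ← op_comp]
    rfl

/-- underlying map of a simplex -/
def vert {m : ℕ} {X : SimplexCategoryᵒᵖ} (s : (Δ[m] : SSet.{0}).obj X) :
    Fin (X.unop.len + 1) →o ℕ :=
  ⟨fun i => (SSet.stdSimplex.asOrderHom s i : ℕ), fun _ _ h =>
    (SSet.stdSimplex.asOrderHom s).monotone h⟩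

def HornP (m i : ℕ) (F : Finset ℕ) : Prop :=
  F ⊆ Finset.range (m + 1) ∧ ∃ j, j ≤ m ∧ j ≠ i ∧ j ∉ F

lemma hornP_vert {m : ℕ} {i : Fin (m + 1)} {X : SimplexCategoryᵒᵖ} (s : (Δ[m] : SSet.{0}).obj X)
    (h : s ∈ (SSet.horn m i).obj X) : HornP m i (img (vert s)) := by
  refine ⟨?_, ?_⟩
  · intro x hx
    obtain ⟨j, rfl⟩ := (mem_img _ _).1 hx
    exact Finset.mem_range.2 (SSet.stdSimplex.asOrderHom s j).2
  · rw [SSet.mem_horn_iff, Set.ne_univ_iff_exists_notMem] at h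
    obtain ⟨a, ha⟩ := h
    simp only [Set.union_singleton, Set.mem_insert_iff, not_or] at ha
    refine ⟨a, by omega, fun h => ha.1 (Fin.ext h), fun h => ha.2 ?_⟩
    obtain ⟨j, hj⟩ := (mem_img _ _).1 h
    exact ⟨j, Fin.ext hj⟩

def PMap.toHornHom {m : ℕ} {i : Fin (m + 1)} (φ : PMap C (HornP m i)) :
    (SSet.horn m i : SSet.{0}) ⟶ C where
  app X := TypeCat.ofHom (fun x => φ.toFun (m := X.unop.len) (vert x.1) (hornP_vert x.1 x.2))
  naturality X Y f := by
    ext x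
    exact φ.nat' f.unop.toOrderHom (vert x.1) _ rfl _ _

lemma simplex_mem_horn {m d : ℕ} {i : Fin (m + 1)} (s : Fin (d + 1) →o Fin (m + 1))
    (h : ∃ j, j ≤ m ∧ j ≠ (i : ℕ) ∧ ∀ a, (s a : ℕ) ≠ j) :
    (SSet.stdSimplex.objMk (n := ⦋m⦌) (m := op ⦋d⦌) s : (Δ[m] : SSet.{0}) _⦋d⦌) ∈
      (SSet.horn m i).obj (op ⦋d⦌) := by
  rw [SSet.mem_horn_iff, Set.ne_univ_iff_exists_notMem]
  obtain ⟨j, h1, h2, h3⟩ := h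
  refine ⟨⟨j, by omega⟩, ?_⟩
  simp only [Set.union_singleton, Set.mem_insert_iff, not_or]
  refine ⟨fun h => h2 (by rw [← h]), ?_⟩
  rintro ⟨a, ha⟩
  exact h3 a (congrArg Fin.val ha)

def toFin {d m : ℕ} (s : Fin (d + 1) →o ℕ) (h : img s ⊆ Finset.range (m + 1)) :
    Fin (d + 1) →o Fin (m + 1) :=
  ⟨fun i => ⟨s i, by simpa using h (self_mem_img s i)⟩, fun i j hij => s.monotone hij⟩

def hornSimplex {m d : ℕ} {i : Fin (m + 1)} (s : Fin (d + 1) →o ℕ) (h : HornP m i (img s)) :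
    (SSet.horn m i : SSet.{0}).obj (op ⦋d⦌) :=
  ⟨_, simplex_mem_horn (i := i) (toFin s h.1) (by
    obtain ⟨j, h1, h2, h3⟩ := h.2
    exact ⟨j, h1, h2, fun a ha => h3 (ha ▸ self_mem_img s a)⟩)⟩

def ofHornHom {m : ℕ} {i : Fin (m + 1)} (f : (SSet.horn m i : SSet.{0}) ⟶ C) :
    PMap C (HornP m i) where
  toFun {d} s h := f.app (op ⦋d⦌) (hornSimplex s h)
  nat α s h h' := by
    have := ConcreteCategory.congr_hom (f.naturality (SimplexCategory.mkHom α).op) (hornSimplex s h)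
    exact this

lemma hom_app_eq {m d : ℕ} (f : (Δ[m] : SSet.{0}) ⟶ C) (s : Fin (d + 1) →o Fin (m + 1)) :
    f.app (op ⦋d⦌) (SSet.stdSimplex.objMk (n := ⦋m⦌) (m := op ⦋d⦌) s) =
      C.map (SimplexCategory.mkHom s).op (SSet.yonedaEquiv f) := by
  have := ConcreteCategory.congr_hom (f.naturality (SimplexCategory.mkHom s).op)
    (SSet.stdSimplex.objMk (n := ⦋m⦌) (m := op ⦋m⦌) OrderHom.id)
  exact this

lemma fillHorn [SSet.Quasicategory C] {m i : ℕ} (h0 : 0 < i) (h1 : i < m)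
    (φ : PMap C (HornP m i)) : ∃ c : C _⦋m⦌, Agree (ofSimplex c) φ := by
  let i' : Fin (m + 1) := ⟨i, by omega⟩
  obtain ⟨σ, hσ⟩ := SSet.Quasicategory.hornFilling (S := C) (n := m) (i := i')
    (by simpa [i', Fin.lt_def] using h0) (by simpa [i', Fin.lt_def] using h1)
    (PMap.toHornHom (i := i') φ)
  refine ⟨SSet.yonedaEquiv σ, fun d s h h' => ?_⟩
  have h2 := ConcreteCategory.congr_hom (NatTrans.congr_app hσ (op ⦋d⦌)) (hornSimplex (i := i') s h')
  refine Eq.trans ?_ h2.symm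
  exact (hom_app_eq σ (toFin s h)).symm


section attach
open Classical

lemma cnt_lt (G : Finset ℕ) {x : ℕ} (hx : x ∈ G) : Nat.count (· ∈ G) x < G.card := by
  have h := Nat.count_strict_mono (p := (· ∈ G)) hx (n := G.sup id + 1) (Nat.lt_succ_of_le (Finset.le_sup (f := id) hx))
  rw [Nat.count_eq_card_filter_range (· ∈ G) (G.sup id + 1)] at h
  exact h.trans_le (Finset.card_le_card (by intro y; simp))

lemma nth_fin (G : Finset ℕ) (hf : {x | x ∈ G}.Finite) : hf.toFinset = G := by
  ext; simp

lemma nth_mem' (G : Finset ℕ) {j : ℕ} (hj : j < G.card) : Nat.nth (· ∈ G) j ∈ G :=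
  Nat.nth_mem (p := (· ∈ G)) j (fun hf => by rw [nth_fin]; exact hj)

lemma cnt_nth (G : Finset ℕ) {j : ℕ} (hj : j < G.card) :
    Nat.count (· ∈ G) (Nat.nth (· ∈ G) j) = j :=
  Nat.count_nth (p := (· ∈ G)) (fun hf => by rw [nth_fin]; exact hj)

lemma nth_mono (G : Finset ℕ) {i j : ℕ} (hij : i ≤ j) (hj : j < G.card) :
    Nat.nth (· ∈ G) i ≤ Nat.nth (· ∈ G) j := by
  have hf : {x | x ∈ G}.Finite := G.finite_toSet
  exact Nat.nth_le_nth_of_lt_card hf hij (by rw [nth_fin]; exact hj)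

lemma attach [SSet.Quasicategory C] (hP : Down P) (G : Finset ℕ) {a k b : ℕ} (ha : a ∈ G)
    (hk : k ∈ G) (hb : b ∈ G) (hak : a < k) (hkb : k < b)
    (hG : ∀ j ∈ G, j ≠ k → P (G.erase j)) (hn : ¬ P (G.erase k)) (φ : PMap C P) :
    ∃ ψ : PMap C (fun F => P F ∨ F ⊆ G), Agree ψ φ := by
  obtain ⟨m, hm⟩ : ∃ m, G.card = m + 1 :=
    ⟨G.card - 1, by have := Finset.card_pos.2 ⟨k, hk⟩; omega⟩
  let r : ℕ → ℕ := Nat.count (· ∈ G)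
  let e : ℕ → ℕ := Nat.nth (· ∈ G)
  have her : ∀ x ∈ G, e (r x) = x := fun x hx => Nat.nth_count (p := (· ∈ G)) hx
  have hre : ∀ j, j ≤ m → r (e j) = j := fun j hj => cnt_nth G (by omega)
  have hrm : Monotone r := Nat.count_monotone _
  have hr : ∀ x ∈ G, r x ≤ m := fun x hx => by
    have := cnt_lt G hx
    simp only [r]; omega
  have hrs : ∀ x ∈ G, ∀ y, x < y → r x < r y := fun x hx y hy => Nat.count_strict_mono hx hy
  let φe : PMap C (HornP m (r k)) := pull φ e (by
    rintro F ⟨h1, j, h2, h3, h4⟩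
    refine ⟨?_, ?_⟩
    · intro x hx y hy hxy
      have := Finset.mem_range.1 (h1 hy)
      exact nth_mono G hxy (by omega)
    · refine hP _ (G.erase (e j)) ?_ (hG _ (nth_mem' G (by omega)) ?_)
      · intro x hx
        obtain ⟨y, hy, rfl⟩ := Finset.mem_image.1 hx
        have := Finset.mem_range.1 (h1 hy)
        refine Finset.mem_erase.2 ⟨fun h => h4 ?_, nth_mem' G (by omega)⟩
        have h5 := congrArg r h
        rw [hre _ (by omega), hre _ h2] at h5
        exact h5 ▸ hy
      · intro h
        exact h3 (by rw [← h, hre _ h2]))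
  obtain ⟨c, hc⟩ := fillHorn (i := r k) (m := m) (lt_of_le_of_lt (Nat.zero_le _) (hrs a ha k hak))
    (lt_of_lt_of_le (hrs k hk b hkb) (hr b hb)) φe
  let ψ : PMap C (fun F => F ⊆ G) := pull (ofSimplex c) r (by
    intro F hF
    refine ⟨hrm.monotoneOn _, fun x hx => ?_⟩
    obtain ⟨y, hy, rfl⟩ := Finset.mem_image.1 hx
    exact Finset.mem_range.2 (by have := hr y (hF hy); omega))
  have hag : Agree φ ψ := by
    intro d s h h'
    have hh : HornP m (r k) (img (pullHom r s (hrm.monotoneOn _))) := by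
      rw [img_pullHom]
      refine ⟨fun x hx => ?_, ?_⟩
      · obtain ⟨y, hy, rfl⟩ := Finset.mem_image.1 hx
        exact Finset.mem_range.2 (by have := hr y (h' hy); omega)
      · obtain ⟨x, hx, hxs⟩ : ∃ x ∈ G.erase k, x ∉ img s := by
          by_contra! hcon
          exact hn (hP _ _ hcon h)
        obtain ⟨hxk, hxG⟩ := Finset.mem_erase.1 hx
        refine ⟨r x, hr x hxG, fun h => hxk ?_, fun h => hxs ?_⟩
        · rw [← her x hxG, h, her k hk]
        · obtain ⟨y, hy, hyx⟩ := Finset.mem_image.1 h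
          rw [← her x hxG, ← hyx, her y (h' hy)]
          exact hy
    refine Eq.trans ?_ (hc (pullHom r s (hrm.monotoneOn _)) hh.1 hh).symm
    refine φ.congr ?_ _
    ext i
    exact (her _ (h' (self_mem_img s i))).symm
  obtain ⟨χ, h1, h2⟩ := glue φ ψ hP (fun F G' h h' => h.trans h') hag
  exact ⟨χ, h1⟩

end attach

def restr (φ : PMap C P) (h : ∀ F, Q F → P F) : PMap C Q where
  toFun s hs := φ.toFun s (h _ hs)
  nat α s _ _ := φ.nat α s _ _

open Classical in
lemma cone [SSet.Quasicategory C] (M k : ℕ) (L : Finset ℕ → Prop) (hL : Down L)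
    (hLM : ∀ F, L F → F ⊆ Finset.range M) (N : ℕ) :
    ∀ (K : Finset ℕ → Prop) (_ : Down K)
    (_ : ∀ F, L F → ¬ K F → L (insert k F) ∧ ¬ K (F.erase k) ∧ (∃ a ∈ F, a < k) ∧ ∃ b ∈ F, k < b)
    (_ : ((Finset.range M).powerset.filter (fun F => L F ∧ ¬ K F)).card = N)
    (φ : PMap C K), ∃ ψ : PMap C (fun F => K F ∨ L F), Agree ψ φ := by
  induction N using Nat.strong_induction_on with
  | _ N ih =>
  intro K hK hc hN φ
  by_cases hne : ∃ F, L F ∧ ¬ K F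
  · have hne2 : ∃ c F, L F ∧ ¬ K F ∧ k ∉ F ∧ F.card = c := by
      obtain ⟨F, h1, h2⟩ := hne
      exact ⟨_, F.erase k, hL _ _ (Finset.erase_subset _ _) h1, (hc F h1 h2).2.1, by simp, rfl⟩
    obtain ⟨F, h1, h2, h3, h4⟩ := Nat.find_spec hne2
    have hmin : ∀ F', L F' → ¬ K F' → k ∉ F' → F.card ≤ F'.card := fun F' a b c =>
      h4.trans_le (Nat.find_min' hne2 ⟨F', a, b, c, rfl⟩)
    obtain ⟨hi, -, ⟨a, ha, hak⟩, b, hb, hkb⟩ := hc F h1 h2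
    obtain ⟨ψ, hψ⟩ := attach hK (insert k F) (a := a) (k := k) (b := b) (by simp [ha]) (by simp)
      (by simp [hb]) hak hkb (by
        intro j hj hjk
        have hjF : j ∈ F := by simpa [hjk] using hj
        by_contra hcon
        have hl : L ((insert k F).erase j) := hL _ _ (Finset.erase_subset _ _) hi
        have h5 := (hc _ hl hcon).2.1
        have h6 := hmin _ (hL _ _ (Finset.erase_subset _ _) hl) h5 (by simp)
        have h7 : ((insert k F).erase j).erase k = F.erase j := by
          ext x; simp only [Finset.mem_erase, Finset.mem_insert]
          constructor
          · tauto
          · rintro ⟨h, h'⟩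
            exact ⟨fun h'' => h3 (h'' ▸ h'), h, Or.inr h'⟩
        rw [h7, Finset.card_erase_of_mem hjF] at h6
        have := Finset.card_pos.2 ⟨j, hjF⟩
        omega) (by rwa [Finset.erase_insert h3]) φ
    have hlt : ((Finset.range M).powerset.filter
        (fun X => L X ∧ ¬ (K X ∨ X ⊆ insert k F))).card < N := by
      rw [← hN]
      refine Finset.card_lt_card ⟨?_, fun h => ?_⟩
      · intro X; simp only [Finset.mem_filter]; tauto
      · have := h (x := F) (by simp only [Finset.mem_filter, Finset.mem_powerset]; exact ⟨hLM _ h1, h1, h2⟩)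
        simp only [Finset.mem_filter] at this
        exact this.2.2 (Or.inr (Finset.subset_insert _ _))
    obtain ⟨χ, hχ⟩ := ih _ hlt (fun X => K X ∨ X ⊆ insert k F) (by
        rintro X Y hXY (h | h)
        · exact Or.inl (hK _ _ hXY h)
        · exact Or.inr (hXY.trans h)) (by
        intro X hX hX'
        rw [not_or] at hX'
        obtain ⟨c1, c2, c3⟩ := hc X hX hX'.1
        refine ⟨c1, ?_, c3⟩
        rintro (h | h)
        · exact c2 h
        · refine hX'.2 fun x hx => ?_
          by_cases hxk : x = k
          · simp [hxk]
          · exact h (Finset.mem_erase.2 ⟨hxk, hx⟩)) (by convert rfl) ψ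
    refine ⟨restr χ (by tauto), fun d s h h' => ?_⟩
    exact (hχ s _ (Or.inl h')).trans (hψ s _ h')
  · push Not at hne
    exact ⟨restr φ (fun F h => h.elim id (hne F)), fun d s h h' => rfl⟩

lemma cone' [SSet.Quasicategory C] (M k : ℕ) {K L : Finset ℕ → Prop} (hK : Down K) (hL : Down L)
    (hLM : ∀ F, L F → F ⊆ Finset.range M)
    (hc : ∀ F, L F → ¬ K F → L (insert k F) ∧ ¬ K (F.erase k) ∧ (∃ a ∈ F, a < k) ∧ ∃ b ∈ F, k < b)
    (φ : PMap C K) : ∃ ψ : PMap C L, Agree ψ φ := by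
  obtain ⟨ψ, h⟩ := cone M k L hL hLM _ K hK hc rfl φ
  exact ⟨restr ψ (fun F hF => Or.inr hF), fun d s a b => h s _ b⟩

section main
variable (n : ℕ)

def HA (F : Finset ℕ) : Prop := ∀ x, x ≤ n → x ∈ F
def K0 (F : Finset ℕ) : Prop := F ⊆ Finset.range (n + 5) ∧
  ((¬ HA n F ∧ (n + 3 ∉ F ∨ (n + 2 ∉ F ∧ n + 4 ∉ F))) ∨ (n + 1 ∉ F ∧ n + 3 ∉ F))
def D (F : Finset ℕ) : Prop := F ⊆ Finset.range (n + 5) ∧ ∀ x ∈ F, n + 1 ≤ x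
def L1 (F : Finset ℕ) : Prop := F ⊆ Finset.range (n + 5) ∧
  (¬ HA n F ∨ (n + 1 ∉ F ∧ n + 3 ∉ F))
def L2 (F : Finset ℕ) : Prop := F ⊆ Finset.range (n + 5) ∧ (¬ HA n F ∨ n + 1 ∉ F)
def B (F : Finset ℕ) : Prop := F ⊆ Finset.range (n + 5) ∧ n + 2 ∉ F ∧ n + 4 ∉ F
def L4 (F : Finset ℕ) : Prop := F ⊆ Finset.range (n + 5) ∧ n + 2 ∉ F

lemma HA_mono {F G : Finset ℕ} (h : F ⊆ G) (hF : HA n F) : HA n G := fun x hx => h (hF x hx)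

lemma down_K0 : Down (K0 n) := by
  rintro F G h ⟨h1, h2⟩
  refine ⟨h.trans h1, ?_⟩
  have h3 := fun x => @h x
  have h4 := HA_mono n h
  rcases h2 with ⟨h2, h5⟩ | ⟨h2, h5⟩
  · exact Or.inl ⟨fun h6 => h2 (h4 h6), h5.imp (fun a b => a (h3 _ b)) (fun a => ⟨fun b => a.1 (h3 _ b), fun b => a.2 (h3 _ b)⟩)⟩
  · exact Or.inr ⟨fun b => h2 (h3 _ b), fun b => h5 (h3 _ b)⟩

lemma down_D : Down (D n) := by
  rintro F G h ⟨h1, h2⟩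
  exact ⟨h.trans h1, fun x hx => h2 x (h hx)⟩

lemma down_L1 : Down (L1 n) := by
  rintro F G h ⟨h1, h2⟩
  exact ⟨h.trans h1, h2.imp (fun a b => a (HA_mono n h b)) (fun a => ⟨fun b => a.1 (h b), fun b => a.2 (h b)⟩)⟩

lemma down_L2 : Down (L2 n) := by
  rintro F G h ⟨h1, h2⟩
  exact ⟨h.trans h1, h2.imp (fun a b => a (HA_mono n h b)) (fun a b => a (h b))⟩

lemma down_B : Down (B n) := by
  rintro F G h ⟨h1, h2⟩
  exact ⟨h.trans h1, fun b => h2.1 (h b), fun b => h2.2 (h b)⟩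

lemma down_L4 : Down (L4 n) := by
  rintro F G h ⟨h1, h2⟩
  exact ⟨h.trans h1, fun b => h2 (h b)⟩

lemma down_or (hP : Down P) (hQ : Down Q) : Down (fun F => P F ∨ Q F) :=
  fun _ _ h => Or.imp (hP _ _ h) (hQ _ _ h)

lemma HA_insert {k : ℕ} (hk : n < k) (F : Finset ℕ) : HA n (insert k F) ↔ HA n F := by
  refine ⟨fun h x hx => ?_, HA_mono n (Finset.subset_insert _ _)⟩
  have := h x hx
  rw [Finset.mem_insert] at this
  exact this.resolve_left (by omega)

lemma HA_erase {k : ℕ} (hk : n < k) (F : Finset ℕ) : HA n (F.erase k) ↔ HA n F := by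
  refine ⟨HA_mono n (Finset.erase_subset _ _), fun h x hx => ?_⟩
  exact Finset.mem_erase.2 ⟨by omega, h x hx⟩

lemma insert_range {k : ℕ} (hk : k < n + 5) {F : Finset ℕ} (h : F ⊆ Finset.range (n + 5)) :
    insert k F ⊆ Finset.range (n + 5) := by
  intro x hx
  rcases Finset.mem_insert.1 hx with rfl | hx
  · exact Finset.mem_range.2 hk
  · exact h hx

lemma cone1 (F) (h : L1 n F) (h' : ¬ (K0 n F ∨ D n F)) : L1 n (insert (n + 1) F) ∧
    ¬ (K0 n (F.erase (n + 1)) ∨ D n (F.erase (n + 1))) ∧ (∃ a ∈ F, a < n + 1) ∧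
    ∃ b ∈ F, n + 1 < b := by
  obtain ⟨h1, h2⟩ := h
  rw [not_or] at h'
  obtain ⟨hk, hd⟩ := h'
  obtain ⟨a, haF, ha⟩ : ∃ a ∈ F, a < n + 1 := by
    by_contra! hcon; exact hd ⟨h1, hcon⟩
  have hA : ¬ HA n F := fun hA => hk ⟨h1, Or.inr (h2.resolve_left (fun h => h hA))⟩
  have hT : ¬ (n + 3 ∉ F ∨ (n + 2 ∉ F ∧ n + 4 ∉ F)) := fun hT => hk ⟨h1, Or.inl ⟨hA, hT⟩⟩
  have h3 : n + 3 ∈ F := by tauto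
  refine ⟨⟨insert_range n (by omega) h1, Or.inl (by rwa [HA_insert n (by omega)])⟩, ?_,
    ⟨a, haF, ha⟩, ⟨n + 3, h3, by omega⟩⟩
  rintro (⟨-, ⟨-, h⟩ | ⟨-, h⟩⟩ | ⟨-, h⟩)
  · simp at h; tauto
  · simp at h; tauto
  · have := h a (Finset.mem_erase.2 ⟨by omega, haF⟩)
    omega

lemma cone2 (F) (h : L2 n F) (h' : ¬ L1 n F) : L2 n (insert (n + 2) F) ∧
    ¬ L1 n (F.erase (n + 2)) ∧ (∃ a ∈ F, a < n + 2) ∧ ∃ b ∈ F, n + 2 < b := by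
  obtain ⟨h1, h2⟩ := h
  have hA : HA n F := by by_contra hA; exact h' ⟨h1, Or.inl hA⟩
  have h0 : n + 1 ∉ F := h2.resolve_left (fun h => h hA)
  have h3 : n + 3 ∈ F := by by_contra h3; exact h' ⟨h1, Or.inr ⟨h0, h3⟩⟩
  refine ⟨⟨insert_range n (by omega) h1, Or.inr (by simp [h0])⟩, ?_,
    ⟨0, hA 0 (by omega), by omega⟩, ⟨n + 3, h3, by omega⟩⟩
  rintro ⟨-, h | ⟨-, h⟩⟩
  · exact h ((HA_erase n (by omega) F).2 hA)
  · exact h (by simp [h3])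

lemma cone3 (F) (h : L4 n F) (h' : ¬ (L2 n F ∨ B n F)) : L4 n (insert (n + 3) F) ∧
    ¬ (L2 n (F.erase (n + 3)) ∨ B n (F.erase (n + 3))) ∧ (∃ a ∈ F, a < n + 3) ∧
    ∃ b ∈ F, n + 3 < b := by
  obtain ⟨h1, h2⟩ := h
  rw [not_or] at h'
  obtain ⟨hl, hb⟩ := h'
  have hA : HA n F := by by_contra hA; exact hl ⟨h1, Or.inl hA⟩
  have h0 : n + 1 ∈ F := by by_contra h0; exact hl ⟨h1, Or.inr h0⟩
  have h4 : n + 4 ∈ F := by by_contra h4; exact hb ⟨h1, h2, h4⟩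
  refine ⟨⟨insert_range n (by omega) h1, by simp [h2]⟩, ?_,
    ⟨n + 1, h0, by omega⟩, ⟨n + 4, h4, by omega⟩⟩
  rintro (⟨-, h | h⟩ | ⟨-, -, h⟩)
  · exact h ((HA_erase n (by omega) F).2 hA)
  · exact h (by simp [h0])
  · exact h (by simp [h4])

/-- collapse map -/
def pr (x : ℕ) : ℕ := if x = n + 3 then n + 1 else if x = n + 4 then n + 2 else x
def kp (x : ℕ) : ℕ := if x = n + 1 then n + 3 else x
def io (x : ℕ) : ℕ := if x ≤ n + 1 then x else n + 4

lemma pr_ok (F : Finset ℕ) (h : K0 n F) : MonotoneOn (pr n) F ∧ HornP (n + 2) (n + 2) (F.image (pr n)) := by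
  obtain ⟨h1, h2⟩ := h
  have h5 : ∀ x ∈ F, x < n + 5 := fun x hx => Finset.mem_range.1 (h1 hx)
  refine ⟨?_, ?_, ?_⟩
  · intro x hx y hy hxy
    have hne : ¬ (x = n + 2 ∧ y = n + 3) := by
      rintro ⟨rfl, rfl⟩
      rw [Finset.mem_coe] at hx hy
      tauto
    have := h5 y hy
    simp only [pr]
    split_ifs <;> omega
  · intro x hx
    obtain ⟨y, hy, rfl⟩ := Finset.mem_image.1 hx
    have := h5 y hy
    rw [Finset.mem_range]
    simp only [pr]
    split_ifs <;> omega
  · rcases h2 with ⟨h2, -⟩ | ⟨h2, h3⟩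
    · simp only [HA, not_forall] at h2
      obtain ⟨j, hj, hj'⟩ := h2
      refine ⟨j, by omega, by omega, fun h => hj' ?_⟩
      obtain ⟨y, hy, hyj⟩ := Finset.mem_image.1 h
      simp only [pr] at hyj
      split_ifs at hyj
      · omega
      · omega
      · exact hyj ▸ hy
    · refine ⟨n + 1, by omega, by omega, fun h => ?_⟩
      obtain ⟨y, hy, hyj⟩ := Finset.mem_image.1 h
      simp only [pr] at hyj
      split_ifs at hyj with h6
      · exact h3 (h6 ▸ hy)
      · omega
      · exact h2 (hyj ▸ hy)

lemma D_ok (F : Finset ℕ) (h : D n F) : MonotoneOn (fun x => x - (n + 1)) F ∧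
    F.image (fun x => x - (n + 1)) ⊆ Finset.range (3 + 1) := by
  obtain ⟨h1, h2⟩ := h
  refine ⟨fun x _ y _ hxy => by dsimp only; omega, ?_⟩
  intro x hx
  obtain ⟨y, hy, rfl⟩ := Finset.mem_image.1 hx
  have := Finset.mem_range.1 (h1 hy)
  rw [Finset.mem_range]; omega

lemma kp_ok (F : Finset ℕ) (h : B n F) : MonotoneOn (kp n) F ∧ L2 n (F.image (kp n)) := by
  obtain ⟨h1, h2, h3⟩ := h
  refine ⟨?_, ?_, Or.inr ?_⟩
  · intro x hx y hy hxy
    rw [Finset.mem_coe] at hx hy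
    have : y ≠ n + 2 := fun h => h2 (h ▸ hy)
    simp only [kp]
    split_ifs <;> omega
  · intro x hx
    obtain ⟨y, hy, rfl⟩ := Finset.mem_image.1 hx
    have := Finset.mem_range.1 (h1 hy)
    rw [Finset.mem_range]; simp only [kp]
    split_ifs <;> omega
  · intro h
    obtain ⟨y, hy, hyj⟩ := Finset.mem_image.1 h
    simp only [kp] at hyj
    split_ifs at hyj <;> omega

lemma io_ok (F : Finset ℕ) (h : F ⊆ Finset.range (n + 2 + 1)) :
    MonotoneOn (io n) F ∧ L4 n (F.image (io n)) := by
  refine ⟨?_, ?_, ?_⟩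
  · intro x hx y hy hxy
    simp only [io]
    split_ifs <;> omega
  · intro x hx
    obtain ⟨y, hy, rfl⟩ := Finset.mem_image.1 hx
    have := Finset.mem_range.1 (h hy)
    rw [Finset.mem_range]; simp only [io]
    split_ifs <;> omega
  · intro h
    obtain ⟨y, hy, hyj⟩ := Finset.mem_image.1 h
    simp only [io] at hyj
    split_ifs at hyj <;> omega

lemma io_K0 (F : Finset ℕ) (h : HornP (n + 2) (n + 2) F) : K0 n (F.image (io n)) := by
  obtain ⟨h1, j, h2, h3, h4⟩ := h
  refine ⟨(io_ok n F h1).2.1, ?_⟩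
  have h5 : n + 3 ∉ F.image (io n) := by
    intro h
    obtain ⟨y, hy, hyj⟩ := Finset.mem_image.1 h
    simp only [io] at hyj
    split_ifs at hyj <;> omega
  have h6 : j ∉ F.image (io n) := by
    intro h
    obtain ⟨y, hy, hyj⟩ := Finset.mem_image.1 h
    simp only [io] at hyj
    split_ifs at hyj
    · exact h4 (hyj ▸ hy)
    · omega
  by_cases hj : j = n + 1
  · exact Or.inr ⟨hj ▸ h6, h5⟩
  · exact Or.inl ⟨fun h => h6 (h j (by omega)), Or.inl h5⟩

/-- The whole gluing and filling argument, once the `3`-simplex is glued. -/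
lemma main_ext [SSet.Quasicategory C] (φ₀ : PMap C (HornP (n + 2) (n + 2))) (τ : C _⦋3⦌)
    (hag : Agree (pull (Q := K0 n) φ₀ (pr n) (pr_ok n))
      (pull (Q := D n) (ofSimplex τ) (fun x => x - (n + 1)) (D_ok n))) :
    ∃ θ : PMap C (fun F => F ⊆ Finset.range (n + 2 + 1)), Agree θ φ₀ := by
  obtain ⟨χ, hχ, -⟩ := glue _ _ (down_K0 n) (down_D n) hag
  obtain ⟨χ₁, hχ₁⟩ := cone' (n + 5) (n + 1) (down_or (down_K0 n) (down_D n)) (down_L1 n)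
    (fun F h => h.1) (cone1 n) χ
  obtain ⟨χ₂, hχ₂⟩ := cone' (n + 5) (n + 2) (down_L1 n) (down_L2 n)
    (fun F h => h.1) (cone2 n) χ₁
  have h2 : Agree χ₂ (pull (Q := K0 n) φ₀ (pr n) (pr_ok n)) := by
    intro d s h h'
    have hl : L1 n (img s) := ⟨h'.1, h'.2.imp (fun a => a.1) id⟩
    exact (hχ₂ s h hl).trans ((hχ₁ s hl (Or.inl h')).trans (hχ s _ h'))
  have h3 : Agree χ₂ (pull (Q := B n) χ₂ (kp n) (kp_ok n)) := by
    intro d s h h'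
    by_cases h0 : n + 1 ∈ img s
    · have hA : ¬ HA n (img s) := h.2.resolve_right (fun h => h h0)
      have hk : K0 n (img s) := ⟨h.1, Or.inl ⟨hA, Or.inr h'.2⟩⟩
      have hk' : K0 n (img (pullHom (kp n) s (kp_ok n _ h').1)) := by
        rw [img_pullHom]
        refine ⟨(kp_ok n _ h').2.1, Or.inl ⟨fun hh => hA fun x hx => ?_, Or.inr ⟨?_, ?_⟩⟩⟩
        · obtain ⟨y, hy, hyj⟩ := Finset.mem_image.1 (hh x hx)
          simp only [kp] at hyj
          split_ifs at hyj
          · omega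
          · exact hyj ▸ hy
        · intro hh
          obtain ⟨y, hy, hyj⟩ := Finset.mem_image.1 hh
          simp only [kp] at hyj
          split_ifs at hyj
          · omega
          · exact h'.2.1 (hyj ▸ hy)
        · intro hh
          obtain ⟨y, hy, hyj⟩ := Finset.mem_image.1 hh
          simp only [kp] at hyj
          split_ifs at hyj
          · omega
          · exact h'.2.2 (hyj ▸ hy)
      refine (h2 s h hk).trans (Eq.trans ?_ (h2 _ (down_L2 n _ _ (Finset.Subset.refl _)
        (by rw [img_pullHom]; exact (kp_ok n _ h').2)) hk').symm)
      refine φ₀.congr ?_ _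
      ext i
      change pr n (s i) = pr n (kp n (s i))
      simp only [pr, kp]
      split_ifs <;> omega
    · refine χ₂.congr ?_ _
      ext i
      change s i = kp n (s i)
      have : s i ≠ n + 1 := fun hh => h0 (hh ▸ self_mem_img s i)
      simp [kp, this]
  obtain ⟨χ₃, h4, -⟩ := glue _ _ (down_L2 n) (down_B n) h3
  obtain ⟨ψ, hψ⟩ := cone (n + 5) (n + 3) (L4 n) (down_L4 n) (fun F h => h.1) _ _
    (down_or (down_L2 n) (down_B n)) (cone3 n) rfl χ₃
  refine ⟨pull ψ (io n) (fun F h => ⟨(io_ok n F h).1, Or.inr (io_ok n F h).2⟩), ?_⟩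
  intro d s h h'
  have hk : K0 n (img (pullHom (io n) s (io_ok n _ h).1)) := by
    rw [img_pullHom]; exact io_K0 n _ h'
  have hl : L2 n (img (pullHom (io n) s (io_ok n _ h).1)) :=
    ⟨hk.1, hk.2.imp (fun a => a.1) (fun a => a.1)⟩
  refine (hψ _ _ (Or.inl hl)).trans ((h4 _ _ hl).trans ((h2 _ hl hk).trans ?_))
  refine φ₀.congr ?_ _
  ext i
  change pr n (io n (s i)) = s i
  have := Finset.mem_range.1 (h (self_mem_img s i))
  simp only [pr, io]
  split_ifs <;> omega

end main

lemma exists_tau [SSet.Quasicategory C] (f g : C _⦋1⦌) (ρ₁ ρ₂ : C _⦋2⦌)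
    (a0 : C.δ 0 ρ₁ = g) (a2 : C.δ 2 ρ₁ = f)
    (b2 : C.δ 2 ρ₂ = g) (b1 : C.δ 1 ρ₂ = C.σ 0 (C.δ 0 f)) :
    ∃ τ : C _⦋3⦌, C.δ 3 τ = ρ₁ ∧ C.δ 2 τ = C.σ 1 f := by
  have e1 : C.δ 0 (C.σ 1 f) = C.σ 0 (C.δ 0 f) :=
    SSet.δ_comp_σ_of_le_apply (S := C) (i := 0) (j := 0) (by simp) f
  have e2 : C.δ 2 (C.σ 1 f) = f := SSet.δ_comp_σ_succ_apply (S := C) 1 f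
  obtain ⟨φ, -, h2, h3⟩ := SSet.horn₃₁.exists_desc (X := C) (SSet.yonedaEquiv.symm ρ₂)
    (SSet.yonedaEquiv.symm (C.σ 1 f)) (SSet.yonedaEquiv.symm ρ₁)
    (by
      rw [SSet.stdSimplex.δ_comp_yonedaEquiv_symm, SSet.stdSimplex.δ_comp_yonedaEquiv_symm, b2, a0])
    (by
      rw [SSet.stdSimplex.δ_comp_yonedaEquiv_symm, SSet.stdSimplex.δ_comp_yonedaEquiv_symm, b1, e1])
    (by
      rw [SSet.stdSimplex.δ_comp_yonedaEquiv_symm, SSet.stdSimplex.δ_comp_yonedaEquiv_symm, e2, a2])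
  obtain ⟨σ, rfl⟩ := SSet.Quasicategory.hornFilling (by decide) (by decide) φ
  refine ⟨SSet.yonedaEquiv σ, ?_, ?_⟩
  · rw [← SSet.stdSimplex.yonedaEquiv_δ_comp, ← SSet.horn.ι_ι_assoc 1 3 (by decide), h3]
    simp
  · rw [← SSet.stdSimplex.yonedaEquiv_δ_comp, ← SSet.horn.ι_ι_assoc 1 2 (by decide), h2]
    simp

/-- agreement can be tested on a simplex through which everything factors -/
lemma agree_of_factor (φ : PMap C P) (ψ : PMap C Q) {m m' : ℕ} (d : Fin (m + 1) →o ℕ)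
    (s : Fin (m' + 1) →o ℕ) (α : Fin (m' + 1) →o Fin (m + 1)) (e : s = d.comp α)
    (h1 : P (img d)) (h2 : Q (img d)) (h : φ.toFun d h1 = ψ.toFun d h2)
    (h1' : P (img s)) (h2' : Q (img s)) : φ.toFun s h1' = ψ.toFun s h2' := by
  rw [φ.nat' α d s e h1, ψ.nat' α d s e h2, h]

def edgeHom (n : ℕ) : Fin (1 + 1) →o ℕ :=
  ⟨fun i => n + 1 + i, fun i j h => by have : (i : ℕ) ≤ j := h; dsimp only; omega⟩

lemma agree_tau (n : ℕ) (φ₀ : PMap C (HornP (n + 2) (n + 2))) (τ : C _⦋3⦌) (ρ₁ : C _⦋2⦌)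
    (he : HornP (n + 2) (n + 2) (img (edgeHom n)))
    (h3 : C.δ 3 τ = ρ₁) (h2 : C.δ 2 τ = C.σ 1 (φ₀.toFun (edgeHom n) he))
    (h1 : C.δ 1 ρ₁ = C.σ 0 (C.δ 1 (φ₀.toFun (edgeHom n) he))) :
    Agree (pull (Q := K0 n) φ₀ (pr n) (pr_ok n))
      (pull (Q := D n) (ofSimplex τ) (fun x => x - (n + 1)) (D_ok n)) := by
  intro m s hs hs'
  have hr : ∀ i, n + 1 ≤ s i ∧ s i < n + 5 := fun i =>
    ⟨hs'.2 _ (self_mem_img s i), Finset.mem_range.1 (hs'.1 (self_mem_img s i))⟩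
  have hA : ∀ F : Finset ℕ, (∀ x ∈ F, n + 1 ≤ x) → ¬ HA n F := fun F hF h => by
    have := hF 0 (h 0 (by omega)); omega
  by_cases hc : n + 3 ∉ img s
  · -- through the face `0,1,3`
    have hne : ∀ i, s i ≠ n + 3 := fun i h => hc (h ▸ self_mem_img s i)
    let d : Fin (2 + 1) →o ℕ := ⟨fun i => n + 1 + ((Fin.succAbove (2 : Fin 4) i : Fin 4) : ℕ),
      fun i j h => by
        have h' := (Fin.strictMono_succAbove (2 : Fin 4)).monotone h
        have h'' : ((Fin.succAbove (2 : Fin 4) i : Fin 4) : ℕ) ≤ (Fin.succAbove (2 : Fin 4) j : Fin 4) := h'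
        dsimp only; omega⟩
    have hd : ∀ i, d i = n + 1 + ((Fin.succAbove (2 : Fin 4) i : Fin 4) : ℕ) := fun i => rfl
    let α : Fin (m + 1) →o Fin (2 + 1) := ⟨fun i => if s i = n + 1 then 0 else
        if s i = n + 2 then 1 else 2, fun i j h => by
          have h' := s.monotone h
          have := hr i
          have := hr j
          have := hne i
          have := hne j
          dsimp only
          split_ifs <;> first | omega | decide⟩
    have hdr : ∀ x ∈ img d, n + 1 ≤ x ∧ x < n + 5 ∧ x ≠ n + 3 := by
      intro x hx
      obtain ⟨i, rfl⟩ := (mem_img _ _).1 hx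
      have h1 : ((Fin.succAbove (2 : Fin 4) i : Fin 4) : ℕ) < 4 := Fin.is_lt _
      have h2 : ((Fin.succAbove (2 : Fin 4) i : Fin 4) : ℕ) ≠ 2 := by
        have key : ∀ i : Fin 3, ((Fin.succAbove (2 : Fin 4) i : Fin 4) : ℕ) ≠ 2 := by decide
        exact key i
      rw [hd]; omega
    have hD : D n (img d) := ⟨fun x hx => Finset.mem_range.2 (hdr x hx).2.1, fun x hx => (hdr x hx).1⟩
    have hK : K0 n (img d) := ⟨hD.1, Or.inl ⟨hA _ hD.2, Or.inl fun h => (hdr _ h).2.2 rfl⟩⟩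
    refine agree_of_factor _ _ d s α ?_ hK hD ?_ hs hs'
    · ext i
      have := hr i
      have := hne i
      change s i = d (if s i = n + 1 then 0 else if s i = n + 2 then 1 else 2)
      split_ifs with c1 c2
      · rw [c1]; rfl
      · rw [c2]; rfl
      · have c3 : s i = n + 4 := by omega
        rw [c3]; rfl
    · have t1 : (pull (Q := D n) (ofSimplex τ) (fun x => x - (n + 1)) (D_ok n)).toFun d hD =
          C.δ 2 τ := by
        refine congrArg (fun (a : ⦋2⦌ ⟶ ⦋3⦌) => C.map a.op τ) ?_
        ext i
        change n + 1 + ((Fin.succAbove (2 : Fin 4) i : Fin 4) : ℕ) - (n + 1) =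
          ((Fin.succAbove (2 : Fin 4) i : Fin 4) : ℕ)
        omega
      rw [t1, h2]
      refine φ₀.nat' (SimplexCategory.σ (1 : Fin 2)).toOrderHom (edgeHom n) _ ?_ _ _
      ext i
      change pr n (n + 1 + ((Fin.succAbove (2 : Fin 4) i : Fin 4) : ℕ)) =
        n + 1 + ((Fin.predAbove (1 : Fin 2) i : Fin 2) : ℕ)
      fin_cases i <;> simp [pr, Fin.succAbove, Fin.predAbove]
  · -- through the edge `0,2`
    rw [not_not] at hc
    have hc' : n + 2 ∉ img s ∧ n + 4 ∉ img s := by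
      have := hs.2; tauto
    have hne : ∀ i, s i ≠ n + 2 ∧ s i ≠ n + 4 := fun i =>
      ⟨fun h => hc'.1 (h ▸ self_mem_img s i), fun h => hc'.2 (h ▸ self_mem_img s i)⟩
    let d : Fin (1 + 1) →o ℕ := ⟨fun i => n + 1 + 2 * i, fun i j h => by
      have : (i : ℕ) ≤ j := h
      dsimp only; omega⟩
    have hd : ∀ i, d i = n + 1 + 2 * i := fun i => rfl
    let α : Fin (m + 1) →o Fin (1 + 1) := ⟨fun i => if s i = n + 1 then 0 else 1, fun i j h => by
          have h' := s.monotone h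
          have := hr i
          have := hr j
          dsimp only
          split_ifs <;> first | omega | decide⟩
    have hdr : ∀ x ∈ img d, x = n + 1 ∨ x = n + 3 := by
      intro x hx
      obtain ⟨i, rfl⟩ := (mem_img _ _).1 hx
      rw [hd]
      have := i.is_lt
      omega
    have hD : D n (img d) := ⟨fun x hx => Finset.mem_range.2 (by have := hdr x hx; omega),
      fun x hx => by have := hdr x hx; omega⟩
    have hK : K0 n (img d) := ⟨hD.1, Or.inl ⟨hA _ hD.2, Or.inr
      ⟨fun h => by have := hdr _ h; omega, fun h => by have := hdr _ h; omega⟩⟩⟩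
    refine agree_of_factor _ _ d s α ?_ hK hD ?_ hs hs'
    · ext i
      have := hr i
      have := hne i
      change s i = d (if s i = n + 1 then 0 else 1)
      split_ifs with c1
      · rw [c1]; rfl
      · have c3 : s i = n + 3 := by omega
        rw [c3]; rfl
    · have t1 : (pull (Q := D n) (ofSimplex τ) (fun x => x - (n + 1)) (D_ok n)).toFun d hD =
          C.δ 1 (C.δ 3 τ) := by
        have : C.δ 1 (C.δ 3 τ) =
            C.map (SimplexCategory.δ (1 : Fin 3) ≫ SimplexCategory.δ (3 : Fin 4)).op τ := by
          rw [op_comp, C.map_comp, ConcreteCategory.comp_apply]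
          rfl
        rw [this]
        refine congrArg (fun (a : ⦋1⦌ ⟶ ⦋3⦌) => C.map a.op τ) ?_
        ext i
        change n + 1 + 2 * (i : ℕ) - (n + 1) =
          ((Fin.succAbove (3 : Fin 4) (Fin.succAbove (1 : Fin 3) i) : Fin 4) : ℕ)
        fin_cases i <;> simp [Fin.succAbove]
      rw [t1, h3, h1]
      have : C.σ 0 (C.δ 1 (φ₀.toFun (edgeHom n) he)) =
            C.map (SimplexCategory.σ (0 : Fin 1) ≫ SimplexCategory.δ (1 : Fin 2)).op
              (φ₀.toFun (edgeHom n) he) := by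
          rw [op_comp, C.map_comp, ConcreteCategory.comp_apply]
          rfl
      rw [this]
      refine φ₀.nat' (SimplexCategory.σ (0 : Fin 1) ≫ SimplexCategory.δ (1 : Fin 2)).toOrderHom
        (edgeHom n) _ ?_ _ _
      ext i
      change pr n (n + 1 + 2 * (i : ℕ)) =
        n + 1 + ((Fin.succAbove (1 : Fin 2) (Fin.predAbove (0 : Fin 1) i) : Fin 2) : ℕ)
      fin_cases i <;> simp [pr, Fin.succAbove, Fin.predAbove]

/-- a map `Δ[m] ⟶ C` from a partial map -/
lemma PMap.exists_hom {m : ℕ} {i : Fin (m + 1)} (θ : PMap C (fun F => F ⊆ Finset.range (m + 1)))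
    (f : (SSet.horn m i : SSet.{0}) ⟶ C) (h : Agree θ (ofHornHom f)) :
    ∃ σ : (Δ[m] : SSet.{0}) ⟶ C, f = (SSet.horn m i).ι ≫ σ := by
  let one : Fin (m + 1) →o ℕ := ⟨fun i => i, fun i j h => h⟩
  have ho : img one ⊆ Finset.range (m + 1) := by
    intro x hx
    obtain ⟨i, rfl⟩ := (mem_img _ _).1 hx
    exact Finset.mem_range.2 i.2
  refine ⟨SSet.yonedaEquiv.symm (θ.toFun one ho), ?_⟩
  ext X x
  obtain ⟨X⟩ := X
  obtain ⟨d⟩ := X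
  have hx := hornP_vert x.1 x.2
  have e1 : f.app (op ⦋d⦌) x = (ofHornHom f).toFun (m := d) (vert x.1) hx := by
    refine congrArg (f.app (op ⦋d⦌)) (Subtype.ext ?_)
    apply SSet.stdSimplex.ext
    intro i
    rfl
  refine e1.trans ((h _ hx.1 hx).symm.trans ?_)
  exact θ.nat' (SSet.stdSimplex.asOrderHom x.1) one (vert x.1) rfl ho _

end PM

open SSetPaper in
theorem outer_horn_filling_of_equivalence
    (C : SSet.{0}) [SSet.Quasicategory C] (n : ℕ)
    (σ₀ : (Λ[n + 2, Fin.last (n + 2)] : SSet) ⟶ C)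
    (he : IsEquivalenceEdge C (σ₀.app (op ⦋1⦌) (topEdge n))) :
    ∃ σ : (Δ[n + 2] : SSet) ⟶ C, σ₀ = Λ[n + 2, Fin.last (n + 2)].ι ≫ σ := by
  have hh : PM.HornP (n + 2) (n + 2) (PM.img (PM.edgeHom n)) := by
    have h : ∀ x ∈ PM.img (PM.edgeHom n), n + 1 ≤ x ∧ x < n + 3 := by
      intro x hx
      obtain ⟨i, rfl⟩ := (PM.mem_img _ _).1 hx
      change n + 1 ≤ n + 1 + (i : ℕ) ∧ n + 1 + (i : ℕ) < n + 3
      have := i.is_lt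
      omega
    exact ⟨fun x hx => Finset.mem_range.2 (by have := h x hx; omega), 0, by omega, by omega,
      fun hx => by have := h 0 hx; omega⟩
  let φ₀ : PM.PMap C (PM.HornP (n + 2) (n + 2)) := PM.ofHornHom (i := Fin.last (n + 2)) σ₀
  have hedge : σ₀.app (op ⦋1⦌) (topEdge n) = φ₀.toFun (PM.edgeHom n) hh := by
    refine congrArg (σ₀.app (op ⦋1⦌)) ?_
    refine Subtype.ext ?_
    refine SSet.stdSimplex.ext _ _ fun i => ?_
    fin_cases i <;> rfl
  rw [hedge] at he
  obtain ⟨g, ⟨ρ₁, a0, a2, a1⟩, ρ₂, b0, b2, b1⟩ := he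
  obtain ⟨τ, t3, t2⟩ := PM.exists_tau _ g ρ₁ ρ₂ a0 a2 b2 b1
  obtain ⟨θ, hθ⟩ := PM.main_ext n φ₀ τ (PM.agree_tau n φ₀ τ ρ₁ hh t3 t2 a1)
  exact PM.PMap.exists_hom θ σ₀ hθ
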